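/- arXiv:1103.5274 — 3 statements merged into one kernel-verified Lean document; each statement's English description precedes it below -/
import Mathlib

section
/- There exists a real number R such that for every complex number c with Re c ≥ R, the map z ↦ ζ(z) + c has exactly one fixed point z with Re z ≥ R; i.e., there is a unique z with Re z ≥ R satisfying ζ(z) + c = z. (Points far in the right half-plane under the additive family ζ(z)+c iterate to a fixed point close to c + 1.) -/
/-! For `Re z ≥ 4`, comparing Dirichlet series termwise with `ζ(4) = π⁴ / 90` gives
`‖ζ(z) - 1‖ ≤ π⁴ / 90 - 1 ≤ 1 / 2`. Two consequences hold on the closed half-plane `Re z ≥ 5`: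
`Re ζ(z) ≥ 1 / 2`, so `z ↦ ζ(z) + c` maps the half-plane to itself whenever `Re c ≥ 5`; and, by
Cauchy's estimate on unit circles, `‖ζ'(z)‖ ≤ 1 / 2`, so this map is a contraction of a complete
metric space. The Banach fixed point theorem concludes, with `R = 5`. -/

theorem norm_riemannZeta_sub_one_le {z : ℂ} (hz : 4 ≤ z.re) : ‖riemannZeta z - 1‖ ≤ 1 / 2 := by
  have h4 : HasSum (fun n : ℕ => 1 / (n : ℝ) ^ 4) (Real.pi ^ 4 / 90) := hasSum_zeta_four
  -- Dropping the terms `n = 0` (which is `1 / 0 = 0`) and `n = 1`.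
  have h4' : HasSum (fun n : ℕ => 1 / ((n + 2 : ℕ) : ℝ) ^ 4) (Real.pi ^ 4 / 90 - 1) := by
    rw [hasSum_nat_add_iff (f := fun n : ℕ => 1 / (n : ℝ) ^ 4)]
    simpa [Finset.sum_range_succ] using h4
  have hle (n : ℕ) : ‖1 / (((n + 2 : ℕ) : ℂ)) ^ z‖ ≤ 1 / ((n + 2 : ℕ) : ℝ) ^ 4 := by
    rw [norm_div, norm_one, Complex.norm_natCast_cpow_of_pos (by lia)]
    have h1 : (1 : ℝ) ≤ ((n + 2 : ℕ) : ℝ) := by exact_mod_cast (by lia : 1 ≤ n + 2)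
    have h := Real.rpow_le_rpow_of_exponent_le h1 hz
    have e : ((n + 2 : ℕ) : ℝ) ^ (4 : ℝ) = ((n + 2 : ℕ) : ℝ) ^ 4 := by
      exact_mod_cast Real.rpow_natCast ((n + 2 : ℕ) : ℝ) 4
    rw [e] at h
    exact one_div_le_one_div_of_le (by positivity) h
  have hz0 : z ≠ 0 := by
    rintro rfl
    norm_num at hz
  have hsum : Summable (fun n : ℕ => 1 / (n : ℂ) ^ z) :=
    Complex.summable_one_div_nat_cpow.mpr (by linarith)
  have hzeta : riemannZeta z - 1 = ∑' n : ℕ, 1 / (((n + 2 : ℕ) : ℂ)) ^ z := by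
    rw [zeta_eq_tsum_one_div_nat_cpow (by linarith), ← hsum.sum_add_tsum_nat_add 2]
    simp [Finset.sum_range_succ, Complex.zero_cpow hz0]
  rw [hzeta]
  refine (tsum_of_norm_bounded h4' hle).trans ?_
  have : Real.pi ^ 4 ≤ 3.15 ^ 4 := by
    gcongr
    exact Real.pi_lt_d2.le
  norm_num at this
  linarith

theorem norm_deriv_riemannZeta_le {z : ℂ} (hz : 5 ≤ z.re) : ‖deriv riemannZeta z‖ ≤ 1 / 2 := by
  have hre {w : ℂ} (hw : w ∈ Metric.closedBall z 1) : 4 ≤ w.re := by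
    rw [mem_closedBall_iff_norm] at hw
    have := (abs_le.mp ((Complex.abs_re_le_norm (w - z)).trans hw)).1
    rw [Complex.sub_re] at this
    linarith
  have hd : DiffContOnCl ℂ (fun w => riemannZeta w - 1) (Metric.ball z 1) := by
    apply DifferentiableOn.diffContOnCl
    rw [closure_ball z one_ne_zero]
    intro w hw
    refine ((differentiableAt_riemannZeta ?_).sub_const 1).differentiableWithinAt
    rintro rfl
    have := hre hw
    norm_num at this
  have h := Complex.norm_deriv_le_of_forall_mem_sphere_norm_le one_pos hd
    (fun w hw => norm_riemannZeta_sub_one_le (hre (Metric.sphere_subset_closedBall hw)))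
  simpa [deriv_sub_const] using h

theorem norm_riemannZeta_sub_le {z w : ℂ} (hz : 5 ≤ z.re) (hw : 5 ≤ w.re) :
    ‖riemannZeta w - riemannZeta z‖ ≤ 1 / 2 * ‖w - z‖ := by
  refine Convex.norm_image_sub_le_of_norm_deriv_le (s := {u : ℂ | 5 ≤ u.re})
    (fun u hu => differentiableAt_riemannZeta ?_) (fun u hu => norm_deriv_riemannZeta_le hu)
    (convex_halfSpace_re_ge 5) hz hw
  rintro rfl
  norm_num at hu

theorem additive_zeta_unique_fixed_point_far_right :
    ∃ R : ℝ, ∀ c : ℂ, R ≤ c.re →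
      ∃! z : ℂ, R ≤ z.re ∧ riemannZeta z + c = z := by
  refine ⟨5, fun c hc => ?_⟩
  have hmaps : Set.MapsTo (fun z => riemannZeta z + c) {z : ℂ | 5 ≤ z.re} {z : ℂ | 5 ≤ z.re} := by
    intro z hz
    have h := (abs_le.mp ((Complex.abs_re_le_norm _).trans
      (norm_riemannZeta_sub_one_le (z := z) (le_trans (by norm_num) hz)))).1
    simp only [Complex.sub_re, Complex.one_re] at h
    simp only [Set.mem_ofPred_eq, Complex.add_re]
    linarith
  have hclosed : IsClosed {z : ℂ | 5 ≤ z.re} := isClosed_le continuous_const Complex.continuous_re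
  have hcontr : ContractingWith (1 / 2) (hmaps.restrict _ _ _) := by
    refine ⟨by rw [← NNReal.coe_lt_coe]; norm_num, LipschitzWith.of_dist_le_mul ?_⟩
    rintro ⟨z, hz⟩ ⟨w, hw⟩
    simpa [Subtype.dist_eq, dist_eq_norm] using norm_riemannZeta_sub_le hw hz
  obtain ⟨z, hz, hfix, -⟩ := hcontr.exists_fixedPoint' hclosed.isComplete hmaps
    (x := c) hc (edist_ne_top _ _)
  refine ⟨z, ⟨hz, hfix⟩, fun w ⟨hw, hwfix⟩ => ?_⟩
  exact congrArg Subtype.val (hcontr.fixedPoint_unique' (x := ⟨w, hw⟩) (y := ⟨z, hz⟩)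
    (Subtype.ext hwfix) (Subtype.ext hfix))
end

section
/- For every natural number n, ζ′(−2(n + 1)) ≠ 0; that is, every trivial zero −2, −4, −6, … of the Riemann zeta function is a simple zero. -/
/-!
The functional equation `ζ(1 - s) = 2 (2π)^(-s) Γ(s) cos(πs/2) ζ(s)` holds in a neighbourhood of the
odd integer `s₀ = 2n + 3`, and `1 - s₀ = -2(n + 1)`. There the factor `2 (2π)^(-s) Γ(s) ζ(s)` is
holomorphic and nonzero (`ζ` does not vanish on `Re s > 1`), while `cos(πs/2)` has a simple zero.
Differentiating at `s₀` therefore gives `-ζ'(1 - s₀)` as a product of nonzero numbers.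
-/

theorem trivial_zeros_are_simple (n : ℕ) :
    deriv riemannZeta (-2 * ((n : ℂ) + 1)) ≠ 0 := by
  set s₀ : ℂ := 2 * n + 3 with hs₀
  have hre : s₀.re = 2 * n + 3 := by simp [hs₀]
  have hn : (0 : ℝ) ≤ n := n.cast_nonneg
  have hre1 : 1 < s₀.re := by rw [hre]; linarith
  have h_one : s₀ ≠ 1 := fun h ↦ by rw [h] at hre1; simp at hre1
  have h_nat {s : ℂ} (hs : 1 < s.re) (m : ℕ) : s ≠ -m := fun h ↦ by
    have hm : (0 : ℝ) ≤ m := m.cast_nonneg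
    rw [h] at hs
    simp at hs
    linarith
  have hpi : (2 * (Real.pi : ℂ)) ≠ 0 := by simp [Real.pi_ne_zero]
  let A : ℂ → ℂ := fun s ↦ 2 * (2 * Real.pi) ^ (-s) * Complex.Gamma s * riemannZeta s
  have hA : DifferentiableAt ℂ A s₀ := by
    refine DifferentiableAt.mul (DifferentiableAt.mul (DifferentiableAt.const_mul ?_ _)
      (Complex.differentiableAt_Gamma _ (h_nat hre1))) (differentiableAt_riemannZeta h_one)
    exact differentiableAt_id.neg.const_cpow (Or.inl hpi)
  have hA0 : A s₀ ≠ 0 :=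
    mul_ne_zero (mul_ne_zero (mul_ne_zero two_ne_zero (by simp [Complex.cpow_eq_zero_iff, hpi]))
      (Complex.Gamma_ne_zero (h_nat hre1))) (riemannZeta_ne_zero_of_one_lt_re hre1)
  have hcos : Complex.cos (Real.pi * s₀ / 2) = 0 :=
    Complex.cos_eq_zero_iff.mpr ⟨n + 1, by rw [hs₀]; push_cast; ring⟩
  have hsin : Complex.sin (Real.pi * s₀ / 2) ≠ 0 := fun h ↦ by
    simpa [h, hcos] using Complex.sin_sq_add_cos_sq (Real.pi * s₀ / 2)
  have hC : HasDerivAt (fun s : ℂ ↦ Complex.cos (Real.pi * s / 2))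
      (-Complex.sin (Real.pi * s₀ / 2) * (Real.pi * 1 / 2)) s₀ :=
    (((hasDerivAt_id s₀).const_mul (Real.pi : ℂ)).div_const 2).ccos
  have hprod := hA.hasDerivAt.mul hC
  have heq : (fun s ↦ riemannZeta (1 - s)) =ᶠ[nhds s₀]
      A * fun s : ℂ ↦ Complex.cos (Real.pi * s / 2) := by
    filter_upwards [(isOpen_lt continuous_const Complex.continuous_re).mem_nhds hre1] with s hs
    have hs1 : s ≠ 1 := fun h ↦ by simp [h] at hs
    rw [riemannZeta_one_sub (h_nat hs) hs1]
    simp only [A, Pi.mul_apply]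
    ring
  have hderiv := (hprod.congr_of_eventuallyEq heq).deriv
  rw [deriv_comp_const_sub, hcos, mul_zero, zero_add] at hderiv
  have hpt : 1 - s₀ = -2 * ((n : ℂ) + 1) := by rw [hs₀]; ring
  rw [hpt] at hderiv
  intro h
  rw [h, neg_zero] at hderiv
  refine mul_ne_zero hA0 (mul_ne_zero (neg_ne_zero.mpr hsin) ?_) hderiv.symm
  simp [Real.pi_ne_zero]
end

section
/- For every complex number z with 0 < Re z and z ≠ 1, the partial sums ∑_{n=1}^{N} (−1)^{n+1} n^{−z} converge as N → ∞, and their limit equals (1 − 2^{1−z}) · ζ(z); that is, the Dirichlet eta alternating series represents (1 − 2^{1−z})ζ(z) throughout the right half-plane Re z > 0. -/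
/-!
Grouping the alternating series in consecutive pairs gives the series with terms
`(2k+1)^(-s) - (2k+2)^(-s)`. By the mean value inequality these terms are `O(|s| k^(-Re s - 1))`
(`norm_etaPair_le`), so the grouped series converges absolutely and locally uniformly on `Re s > 0`
and its sum is holomorphic there (`differentiableOn_tsum_etaPair`). For `Re s > 1` rearranging
absolutely convergent series shows that the sum is `(1 - 2^(1-s)) ζ(s)`
(`tsum_etaPair_of_one_lt_re`). After multiplication by `s - 1`, which removes the pole of `ζ`, both
sides are holomorphic on the whole half-plane, which is convex, so the identity theorem extends the
equality to `Re s > 0` (`tsum_etaPair_eq`).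

Finally, the partial sums of even length of the alternating series are the partial sums of the
grouped series, and a partial sum of odd length differs from one of even length by a single term
of norm `n^(-Re z)`, which tends to `0`.
-/

open Filter Topology Complex

/-- The sum of the `(2k+1)`-st and `(2k+2)`-nd terms of the eta series at `s`. -/
noncomputable def etaPair (k : ℕ) (s : ℂ) : ℂ :=
  ((2 * k + 1 : ℕ) : ℂ) ^ (-s) - ((2 * k + 2 : ℕ) : ℂ) ^ (-s)

/-- The bound is uniform in `s` on `{δ ≤ Re s, ‖s‖ ≤ R}` and summable over `k`. It comes from
the mean value inequality for `t ↦ t ^ (-s)` on `[2k+1, 2k+2]`. -/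
lemma norm_etaPair_le {δ R : ℝ} (hδ : 0 < δ) (k : ℕ) {s : ℂ} (hs : δ ≤ s.re) (hR : ‖s‖ ≤ R) :
    ‖etaPair k s‖ ≤ R * ((k + 1 : ℕ) : ℝ) ^ (-(δ + 1)) := by
  have hs0 : -s ≠ 0 := by
    intro h
    have : s = 0 := neg_eq_zero.mp h
    rw [this, zero_re] at hs
    linarith
  have key := norm_image_sub_le_of_norm_deriv_le_segment' (a := 2 * (k : ℝ) + 1)
    (b := 2 * (k : ℝ) + 2) (f := fun t : ℝ => (t : ℂ) ^ (-s))
    (f' := fun t : ℝ => -s * (t : ℂ) ^ (-s - 1)) (C := R * ((k + 1 : ℕ) : ℝ) ^ (-(δ + 1)))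
    (fun x hx => by
      have hx0 : x ≠ 0 := by
        have := hx.1
        have : (0 : ℝ) ≤ k := k.cast_nonneg
        intro h; linarith
      exact (hasDerivAt_ofReal_cpow_const hx0 hs0).hasDerivWithinAt)
    (fun x hx => by
      have hk : (0 : ℝ) ≤ k := k.cast_nonneg
      have hx1 := hx.1
      have hx0 : 0 < x := by linarith
      rw [norm_mul, norm_neg, norm_cpow_eq_rpow_re_of_pos hx0]
      have h1 : x ^ (-s - 1).re ≤ x ^ (-(δ + 1)) := by
        apply Real.rpow_le_rpow_of_exponent_le (by linarith)
        simp only [sub_re, neg_re, one_re]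
        linarith
      have h2 : x ^ (-(δ + 1)) ≤ ((k + 1 : ℕ) : ℝ) ^ (-(δ + 1)) := by
        apply Real.rpow_le_rpow_of_nonpos (by positivity) _ (by linarith)
        push_cast
        linarith
      exact mul_le_mul hR (h1.trans h2) (by positivity) ((norm_nonneg s).trans hR))
    (2 * (k : ℝ) + 2) ⟨by linarith, le_rfl⟩
  rw [etaPair, norm_sub_rev]
  refine (Eq.le ?_).trans (key.trans (Eq.le ?_))
  · push_cast; rfl
  · ring

lemma summable_etaPair_bound {δ : ℝ} (hδ : 0 < δ) (R : ℝ) :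
    Summable fun k : ℕ => R * ((k + 1 : ℕ) : ℝ) ^ (-(δ + 1)) :=
  ((summable_nat_add_iff 1).mpr (Real.summable_nat_rpow.mpr (by linarith))).mul_left R

lemma summable_etaPair {s : ℂ} (hs : 0 < s.re) : Summable fun k => etaPair k s :=
  .of_norm_bounded (summable_etaPair_bound hs ‖s‖) fun k => norm_etaPair_le hs k le_rfl le_rfl

lemma differentiable_etaPair (k : ℕ) : Differentiable ℂ (etaPair k) := by
  unfold etaPair
  have h1 : ((2 * k + 1 : ℕ) : ℂ) ≠ 0 := Nat.cast_ne_zero.mpr (by omega)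
  have h2 : ((2 * k + 2 : ℕ) : ℂ) ≠ 0 := Nat.cast_ne_zero.mpr (by omega)
  exact (differentiable_neg.const_cpow (.inl h1)).sub (differentiable_neg.const_cpow (.inl h2))

lemma differentiableOn_tsum_etaPair :
    DifferentiableOn ℂ (fun s => ∑' k, etaPair k s) {s : ℂ | 0 < s.re} := by
  intro s hs
  have hs : 0 < s.re := hs
  -- a bounded open neighbourhood of `s` staying away from the imaginary axis
  set U : Set ℂ := {w : ℂ | s.re / 2 < w.re} ∩ {w : ℂ | ‖w‖ < ‖s‖ + 1}
  have hU : IsOpen U := (isOpen_lt continuous_const continuous_re).inter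
    (isOpen_lt continuous_norm continuous_const)
  have hsU : s ∈ U := ⟨half_lt_self hs, lt_add_one ‖s‖⟩
  have h := differentiableOn_tsum_of_summable_norm (F := etaPair)
    (summable_etaPair_bound (half_pos hs) (‖s‖ + 1))
    (fun k => (differentiable_etaPair k).differentiableOn) hU
    (fun k w hw => norm_etaPair_le (half_pos hs) k (le_of_lt hw.1) (le_of_lt hw.2))
  exact (h.differentiableAt (hU.mem_nhds hsU)).differentiableWithinAt

/-- With `A` and `B` the sums of `n ^ (-s)` over odd and even `n`, one has `A + B = ζ(s)` and
`B = 2 ^ (-s) ζ(s)`, so `A - B = (1 - 2 ^ (1 - s)) ζ(s)`. -/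
lemma tsum_etaPair_of_one_lt_re {s : ℂ} (hs : 1 < s.re) :
    ∑' k, etaPair k s = (1 - (2 : ℂ) ^ (1 - s)) * riemannZeta s := by
  have hsum : Summable fun n : ℕ => ((n + 1 : ℕ) : ℂ) ^ (-s) := by
    have := (summable_nat_add_iff 1).mpr (Complex.summable_one_div_nat_cpow.mpr hs)
    refine this.congr fun n => ?_
    rw [cpow_neg, one_div]
  have hζ : riemannZeta s = ∑' n : ℕ, ((n + 1 : ℕ) : ℂ) ^ (-s) := by
    rw [zeta_eq_tsum_one_div_nat_add_one_cpow hs]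
    refine tsum_congr fun n => ?_
    rw [cpow_neg, one_div]
    push_cast
    rfl
  have hA : Summable fun k : ℕ => ((2 * k + 1 : ℕ) : ℂ) ^ (-s) :=
    hsum.comp_injective (i := fun k : ℕ => 2 * k) fun a b h => by simpa using h
  have hBterm (k : ℕ) :
      ((2 * k + 2 : ℕ) : ℂ) ^ (-s) = (2 : ℂ) ^ (-s) * ((k + 1 : ℕ) : ℂ) ^ (-s) := by
    have := natCast_mul_natCast_cpow 2 (k + 1) (-s)
    rw [← Nat.cast_ofNat (R := ℂ), ← this]
    congr 1
    push_cast
    ring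
  have hB : Summable fun k : ℕ => ((2 * k + 2 : ℕ) : ℂ) ^ (-s) := by
    simp_rw [hBterm]
    exact hsum.mul_left _
  have hBζ : ∑' k : ℕ, ((2 * k + 2 : ℕ) : ℂ) ^ (-s) = (2 : ℂ) ^ (-s) * riemannZeta s := by
    simp_rw [hBterm]
    rw [tsum_mul_left, hζ]
  have hAB := tsum_even_add_odd (f := fun n : ℕ => ((n + 1 : ℕ) : ℂ) ^ (-s)) hA hB
  rw [← hζ] at hAB
  have h2 : (2 : ℂ) ^ (1 - s) = 2 * (2 : ℂ) ^ (-s) := by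
    rw [sub_eq_add_neg, cpow_add _ _ two_ne_zero, cpow_one]
  unfold etaPair
  rw [hA.tsum_sub hB, h2]
  linear_combination hAB - 2 * hBζ

lemma tsum_etaPair_eq {s : ℂ} (hs : 0 < s.re) (hs1 : s ≠ 1) :
    ∑' k, etaPair k s = (1 - (2 : ℂ) ^ (1 - s)) * riemannZeta s := by
  have hopen : IsOpen {s : ℂ | 0 < s.re} := isOpen_lt continuous_const continuous_re
  -- `riemannZeta₁ w` is the entire function extending `(w - 1) * ζ(w)`
  have hEq : Set.EqOn (fun w : ℂ => (w - 1) * ∑' k, etaPair k w)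
      (fun w : ℂ => (1 - (2 : ℂ) ^ (1 - w)) * riemannZeta₁ w) {s : ℂ | 0 < s.re} := by
    refine AnalyticOnNhd.eqOn_of_preconnected_of_eventuallyEq (𝕜 := ℂ) (z₀ := 2) ?_ ?_
      (convex_halfSpace_re_gt 0).isPreconnected (by simp) ?_
    · refine DifferentiableOn.analyticOnNhd ?_ hopen
      exact DifferentiableOn.mul (by fun_prop) differentiableOn_tsum_etaPair
    · refine DifferentiableOn.analyticOnNhd (Differentiable.differentiableOn ?_) hopen
      have : Differentiable ℂ fun w : ℂ => (2 : ℂ) ^ (1 - w) :=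
        Differentiable.const_cpow (by fun_prop) (.inl two_ne_zero)
      fun_prop
    · filter_upwards [(isOpen_lt continuous_const continuous_re).mem_nhds
        (show (1 : ℝ) < (2 : ℂ).re by norm_num)] with w hw
      have hw : 1 < w.re := hw
      have hw1 : w - 1 ≠ 0 := sub_ne_zero.mpr (by rintro rfl; simp at hw)
      rw [tsum_etaPair_of_one_lt_re hw, riemannZeta_eq_inv_sub_mul (sub_ne_zero.mp hw1)]
      field_simp
  have h := hEq hs
  have hs1' : s - 1 ≠ 0 := sub_ne_zero.mpr hs1
  rw [riemannZeta_eq_inv_sub_mul hs1]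
  apply mul_left_cancel₀ hs1'
  rw [show (s - 1) * ∑' k, etaPair k s = _ from h]
  field_simp

lemma sum_Icc_two_mul_eq_sum_etaPair (z : ℂ) (M : ℕ) :
    ∑ n ∈ Finset.Icc 1 (2 * M), (-1 : ℂ) ^ (n + 1) * (n : ℂ) ^ (-z) =
      ∑ k ∈ Finset.range M, etaPair k z := by
  induction M with
  | zero => simp
  | succ M ih =>
    rw [show 2 * (M + 1) = 2 * M + 1 + 1 by ring, Finset.sum_Icc_succ_top (by omega),
      Finset.sum_Icc_succ_top (by omega), ih, Finset.sum_range_succ, etaPair]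
    have h1 : (-1 : ℂ) ^ (2 * M + 1 + 1) = 1 := Even.neg_one_pow ⟨M + 1, by ring⟩
    have h2 : (-1 : ℂ) ^ (2 * M + 1 + 1 + 1) = -1 := Odd.neg_one_pow ⟨M + 1, by ring⟩
    rw [h1, h2]
    ring

theorem eta_series_represents_zeta (z : ℂ) (hre : 0 < z.re) (hz : z ≠ 1) :
    Filter.Tendsto
      (fun N : ℕ => ∑ n ∈ Finset.Icc 1 N, (-1 : ℂ) ^ (n + 1) * (n : ℂ) ^ (-z))
      Filter.atTop (nhds ((1 - (2 : ℂ) ^ (1 - z)) * riemannZeta z)) := by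
  set S : ℕ → ℂ := fun N => ∑ n ∈ Finset.Icc 1 N, (-1 : ℂ) ^ (n + 1) * (n : ℂ) ^ (-z) with hS
  have heven : Tendsto (fun M : ℕ => S (2 * M)) atTop
      (𝓝 ((1 - (2 : ℂ) ^ (1 - z)) * riemannZeta z)) := by
    simp only [hS, sum_Icc_two_mul_eq_sum_etaPair]
    rw [← tsum_etaPair_eq hre hz]
    exact (summable_etaPair hre).hasSum.tendsto_sum_nat
  have hhalf : Tendsto (fun N : ℕ => N / 2) atTop atTop :=
    Nat.tendsto_div_const_atTop two_ne_zero
  have hdiff : Tendsto (fun N : ℕ => S N - S (2 * (N / 2))) atTop (𝓝 0) := by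
    refine squeeze_zero_norm' (a := fun N : ℕ => (N : ℝ) ^ (-z.re)) ?_
      ((tendsto_rpow_neg_atTop hre).comp tendsto_natCast_atTop_atTop)
    filter_upwards with N
    rcases Nat.even_or_odd' N with ⟨M, rfl | rfl⟩
    · rw [Nat.mul_div_cancel_left M two_pos, sub_self, norm_zero]
      positivity
    · rw [show (2 * M + 1) / 2 = M by omega]
      simp only [hS]
      rw [Finset.sum_Icc_succ_top (by omega), add_sub_cancel_left, norm_mul, norm_pow, norm_neg,
        norm_one, one_pow, one_mul, norm_natCast_cpow_of_pos (by omega), neg_re]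
  simpa using hdiff.add (heven.comp hhalf)
end
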